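/- arXiv:2312.01359 — 2 statements merged into one kernel-verified Lean document; each statement's English description precedes it below -/
import Mathlib

section
/- Let T be a string of length n ≥ 2 over an alphabet Σ whose last character occurs exactly once in T. Let γ be the minimum cardinality of a string attractor for T and χ be the minimum cardinality of a suffixient set for T (both minima exist, since {1,…,n} is both a string attractor and a suffixient set for T). Then γ ≤ χ. -/
/-- The 1-based (inclusive) substring `T[i..j]` of a string `T`. -/
def Substr {A : Type*} (T : List A) (i j : ℕ) : List A := (T.take j).drop (i - 1)

/-- A string `w` (possibly empty) is right-maximal in `T` if there are two distinct
characters `c ≠ c'` such that both `w·c` and `w·c'` occur (as substrings) in `T`. -/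
def RightMaximal {A : Type*} (T w : List A) : Prop :=
  ∃ c c' : A, c ≠ c' ∧ (w ++ [c]) <:+: T ∧ (w ++ [c']) <:+: T

/-- `S ⊆ {1,…,n}` is suffixient for `T` if for every right-maximal string `w` in `T`
and every character `c` such that `w·c` occurs in `T`, there is `s ∈ S` such that
`w·c` is a suffix of `T[1..s]`. -/
def IsSuffixient {A : Type*} (T : List A) (S : Finset ℕ) : Prop :=
  (∀ s ∈ S, 1 ≤ s ∧ s ≤ T.length) ∧
  ∀ (w : List A) (c : A), RightMaximal T w → (w ++ [c]) <:+: T →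
    ∃ s ∈ S, (w ++ [c]) <:+ T.take s

/-- `Γ ⊆ {1,…,n}` is a string attractor for `T` if every substring `T[i..j]` has an
occurrence `T[i'..j']` crossing a position of `Γ`. -/
def IsAttractor {A : Type*} (T : List A) (Γ : Finset ℕ) : Prop :=
  (∀ s ∈ Γ, 1 ≤ s ∧ s ≤ T.length) ∧
  ∀ i j, 1 ≤ i → i ≤ j → j ≤ T.length →
    ∃ i' j', 1 ≤ i' ∧ i' ≤ j' ∧ j' ≤ T.length ∧
      Substr T i' j' = Substr T i j ∧ ∃ s ∈ Γ, i' ≤ s ∧ s ≤ j'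


theorem rightMaximal_nil {A : Type*} [DecidableEq A] (T : List A)
    (hne : T ≠ []) (hn : 2 ≤ T.length)
    (hlast : T.count (T.getLast hne) = 1) : RightMaximal T [] := by
  match T, hne, hn, hlast with
  | y :: z :: t, hne, hn, hlast =>
    have hm : (z :: t).getLast (by simp) ∈ z :: t := List.getLast_mem _
    rw [List.getLast_cons (by simp : z :: t ≠ [])] at hlast
    generalize (z :: t).getLast (by simp) = x at hm hlast
    refine ⟨y, x, ?_, ⟨[], z :: t, by simp⟩, ?_⟩
    · rintro rfl
      have h1 := List.count_pos_iff.2 hm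
      rw [List.count_cons_self] at hlast
      omega
    · obtain ⟨a, b, hab⟩ := List.append_of_mem hm
      exact ⟨y :: a, b, by rw [hab]; simp⟩

theorem suffixient_cross {A : Type*} [DecidableEq A] (T : List A)
    (hne : T ≠ []) (hn : 2 ≤ T.length)
    (hlast : T.count (T.getLast hne) = 1) (S : Finset ℕ) (hS : IsSuffixient T S)
    (w : List A) : w ≠ [] → w <:+: T →
    ∃ s ∈ S, ∃ p q, T = p ++ w ++ q ∧ p.length + 1 ≤ s ∧ s ≤ p.length + w.length := by
  induction w using List.reverseRecOn with
  | nil => intro h; exact absurd rfl h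
  | append_singleton v c ih =>
    intro _ hin
    by_cases hr : RightMaximal T v
    · obtain ⟨s, hs, p, hp⟩ := hS.2 v c hr hin
      have hlen := congrArg List.length hp
      have := hS.1 s hs
      simp at hlen
      refine ⟨s, hs, p, T.drop s, ?_, ?_, ?_⟩
      · rw [hp, List.take_append_drop]
      · omega
      · simp; omega
    · have hv : v ≠ [] := by
        rintro rfl
        exact hr (rightMaximal_nil T hne hn hlast)
      obtain ⟨p', q', hT'⟩ := hin
      obtain ⟨s, hs, p, q, hT, h1, h2⟩ := ih hv ⟨p', c :: q', by rw [← hT']; simp⟩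
      cases q with
      | nil =>
        exfalso
        have e1 : T.getLast hne = v.getLast hv := by
          subst hT
          simp [List.getLast_append, hv]
        have e2 : T.getLast hne ∈ c :: q' := by
          have : T = (p' ++ v) ++ (c :: q') := by rw [← hT']; simp
          subst this
          rw [List.getLast_append_of_ne_nil _ (by simp)]
          exact List.getLast_mem _
        have e3 : T.getLast hne ∈ v := e1 ▸ List.getLast_mem hv
        have h3 := List.count_pos_iff.2 e2
        have h4 := List.count_pos_iff.2 e3
        have h5 : T.count (T.getLast hne) = ((p' ++ v) ++ (c :: q')).count (T.getLast hne) := by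
          congr 1
          rw [← hT']; simp
        rw [List.count_append, List.count_append] at h5
        omega
      | cons d q =>
        have hdc : d = c := by
          by_contra hdc
          exact hr ⟨d, c, hdc, ⟨p, q, by rw [hT]; simp⟩, ⟨p', q', hT'⟩⟩
        subst hdc
        exact ⟨s, hs, p, q, by rw [hT]; simp, h1, by simp; omega⟩

theorem suffixient_attractor {A : Type*} [DecidableEq A] (T : List A)
    (hne : T ≠ []) (hn : 2 ≤ T.length)
    (hlast : T.count (T.getLast hne) = 1) (S : Finset ℕ) (hS : IsSuffixient T S) :
    IsAttractor T S := by
  refine ⟨hS.1, fun i j hi hij hj => ?_⟩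
  have hlen : (Substr T i j).length = j - (i - 1) := by
    simp [Substr, hj]
  have hw : Substr T i j ≠ [] := by
    intro h
    rw [h] at hlen
    simp at hlen
    omega
  have hin : Substr T i j <:+: T :=
    (List.drop_suffix _ _).isInfix.trans (List.take_prefix _ _).isInfix
  obtain ⟨s, hs, p, q, hT, h1, h2⟩ := suffixient_cross T hne hn hlast S hS _ hw hin
  have hl := congrArg List.length hT
  simp only [List.length_append] at hl
  refine ⟨p.length + 1, p.length + (Substr T i j).length, by omega, by omega, by omega, ?_,
    s, hs, h1, h2⟩
  generalize Substr T i j = w at hT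
  subst hT
  rw [Substr, ← List.length_append, List.take_left]
  simp

theorem suffixient_full {A : Type*} (T : List A) :
    IsSuffixient T (Finset.Icc 1 T.length) := by
  refine ⟨fun s hs => Finset.mem_Icc.1 hs, ?_⟩
  rintro w c - ⟨p, q, rfl⟩
  refine ⟨(p ++ (w ++ [c])).length, ?_, ?_⟩
  · simp; omega
  · rw [List.take_left]
    exact List.suffix_append _ _

/-- The minimum cardinality `γ` of a string attractor for `T` is at most the minimum
cardinality `χ` of a suffixient set for `T` (both minima exist, since `{1,…,n}` is
both a string attractor and a suffixient set for `T`). -/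
theorem gamma_le_chi {A : Type*} [DecidableEq A] (T : List A)
    (hne : T ≠ []) (hn : 2 ≤ T.length)
    (hlast : T.count (T.getLast hne) = 1) :
    {k : ℕ | ∃ Γ : Finset ℕ, IsAttractor T Γ ∧ Γ.card = k}.Nonempty ∧
    {k : ℕ | ∃ S : Finset ℕ, IsSuffixient T S ∧ S.card = k}.Nonempty ∧
    sInf {k : ℕ | ∃ Γ : Finset ℕ, IsAttractor T Γ ∧ Γ.card = k} ≤
      sInf {k : ℕ | ∃ S : Finset ℕ, IsSuffixient T S ∧ S.card = k} := by
  have hs : {k : ℕ | ∃ S : Finset ℕ, IsSuffixient T S ∧ S.card = k}.Nonempty :=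
    ⟨_, _, suffixient_full T, rfl⟩
  refine ⟨⟨_, _, suffixient_attractor T hne hn hlast _ (suffixient_full T), rfl⟩, hs, ?_⟩
  obtain ⟨S, hS, hc⟩ := Nat.sInf_mem hs
  exact Nat.sInf_le ⟨S, suffixient_attractor T hne hn hlast S hS, hc⟩
end

section
/- Let T be a string of length n ≥ 2 over a linearly ordered alphabet Σ whose last character occurs exactly once in T. Let γ be the minimum cardinality of a string attractor for T, χ the minimum cardinality of a suffixient set for T, and r̄ the number of runs of BWT(reverse(T)). Then γ ≤ χ ≤ 2·r̄. -/
/-- The rotation start offsets `0, …, n−1` of `W`, sorted so that the corresponding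
cyclic rotations of `W` are in (non-decreasing, hence for distinct rotations increasing)
lexicographic order.  The `j`-th (1-based) lexicographically smallest rotation of `W`
is `W.rotate ((sortedRotIdx W).getD (j-1) 0)`. -/
def sortedRotIdx {A : Type*} [LinearOrder A] (W : List A) : List ℕ :=
  List.insertionSort (fun a b => W.rotate a ≤ W.rotate b) (List.range W.length)

/-- The Burrows–Wheeler transform of `W`: the `j`-th entry is the last character of the
`j`-th lexicographically smallest cyclic rotation of `W` (as an `Option`, which is
always `some` when `W` is nonempty). -/
def BWT {A : Type*} [LinearOrder A] (W : List A) : List (Option A) :=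
  (sortedRotIdx W).map (fun k => (W.rotate k).getLast?)

/-- The number of runs (maximal blocks of consecutive equal characters) of a string. -/
def runsCount {B : Type*} [DecidableEq B] (L : List B) : ℕ :=
  (L.destutter (· ≠ ·)).length

/-- `j` (1-based) is the first or the last position of some run of `L`. -/
def IsRunBoundary {B : Type*} (L : List B) (j : ℕ) : Prop :=
  1 ≤ j ∧ j ≤ L.length ∧
    (j = 1 ∨ L[j-2]? ≠ L[j-1]? ∨ j = L.length ∨ L[j-1]? ≠ L[j]?)

instance {B : Type*} [DecidableEq B] (L : List B) : DecidablePred (IsRunBoundary L) :=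
  fun j => by unfold IsRunBoundary; infer_instance

/-- If the `j`-th (1-based) lexicographically smallest rotation of `W = reverse T`
starts at (1-based) index `i` of `W`, then `pos(j) = 1` if `i = 1` and
`pos(j) = n − i + 2` otherwise; with this definition `T[pos(j)]` is the `j`-th
character of `BWT W`. -/
def posOf {A : Type*} [LinearOrder A] (W : List A) (j : ℕ) : ℕ :=
  if (sortedRotIdx W).getD (j-1) 0 = 0 then 1
  else W.length - (sortedRotIdx W).getD (j-1) 0 + 1

open List in
theorem aux_cover {A : Type*} (T' : List A) (e : A) (he : e ∉ T') (hT' : T' ≠ [])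
    (S : Finset ℕ) (hS : IsSuffixient (T' ++ [e]) S) (β : List A) :
    β ≠ [] → β <:+: T' ++ [e] →
    ∃ u v, T' ++ [e] = u ++ β ++ v ∧ ∃ s ∈ S, u.length < s ∧ s ≤ u.length + β.length := by
  induction β using List.reverseRecOn with
  | nil => intro h; exact absurd rfl h
  | append_singleton w c ih =>
    intro _ hin
    by_cases hr : RightMaximal (T' ++ [e]) w
    · obtain ⟨s, hs, u, hu⟩ := hS.2 w c hr hin
      have hb := hS.1 s hs
      have hl := congrArg List.length hu
      simp only [List.length_append, List.length_take, List.length_singleton] at hl hb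
      refine ⟨u, (T' ++ [e]).drop s, ?_, s, hs, ?_, ?_⟩
      · rw [hu, List.take_append_drop]
      · omega
      · simp only [List.length_append, List.length_singleton]; omega
    · have hw : w ≠ [] := by
        rintro rfl
        apply hr
        obtain ⟨x, l, rfl⟩ := List.exists_cons_of_ne_nil hT'
        refine ⟨x, e, ?_, ⟨[], l ++ [e], by simp⟩, ⟨x :: l, [], by simp⟩⟩
        rintro rfl
        simp at he
      obtain ⟨p, q, hpq⟩ := hin
      obtain ⟨u, v, huv, s, hs, h1, h2⟩ := ih hw ⟨p, [c] ++ q, by rw [← hpq]; simp⟩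
      cases v with
      | nil =>
        exfalso
        obtain ⟨w', d, rfl⟩ : ∃ w' d, w = w' ++ [d] :=
          ⟨_, _, (List.dropLast_append_getLast hw).symm⟩
        have h3 : T' ++ [e] = (u ++ w') ++ [d] := by rw [huv]; simp
        have hd := (List.append_inj' h3 rfl).2
        simp only [List.cons.injEq, and_true] at hd
        subst hd
        obtain ⟨q', d', hq⟩ : ∃ q' d', c :: q = q' ++ [d'] :=
          ⟨_, _, (List.dropLast_append_getLast (by simp)).symm⟩
        have h4 : T' ++ [e] = (p ++ w' ++ [e] ++ q') ++ [d'] := by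
          rw [← hpq]; simp [← hq]
        have := (List.append_inj' h4 rfl).1
        apply he
        rw [this]; simp
      | cons c' v' =>
        by_cases hc : c = c'
        · subst hc
          refine ⟨u, v', by rw [huv]; simp, s, hs, h1, ?_⟩
          simp only [List.length_append]; omega
        · exact absurd ⟨c, c', hc, ⟨p, q, hpq⟩, ⟨u, v', by rw [huv]; simp⟩⟩ hr

theorem aux_attractor {A : Type*} (T' : List A) (e : A) (he : e ∉ T') (hT' : T' ≠ [])
    (S : Finset ℕ) (hS : IsSuffixient (T' ++ [e]) S) : IsAttractor (T' ++ [e]) S := by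
  refine ⟨hS.1, ?_⟩
  intro i j hi hij hj
  set T := T' ++ [e] with hT
  have hlen : (Substr T i j).length = j - (i - 1) := by
    simp only [Substr, List.length_drop, List.length_take]; omega
  have hne : Substr T i j ≠ [] := by
    intro h; rw [h] at hlen; simp at hlen; omega
  have hin : Substr T i j <:+: T :=
    (List.drop_suffix _ _).isInfix.trans (List.take_prefix _ _).isInfix
  obtain ⟨u, v, huv, s, hs, h1, h2⟩ := aux_cover T' e he hT' S hS _ hne hin
  rw [← hT] at huv
  have hl := congrArg List.length huv
  simp only [List.length_append] at hl
  refine ⟨u.length + 1, u.length + (Substr T i j).length, by omega, by omega, by omega, ?_,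
    s, hs, by omega, by omega⟩
  generalize Substr T i j = β at *
  unfold Substr
  rw [huv, ← List.length_append, List.take_left, Nat.add_sub_cancel, List.drop_left]

/-- endpoints of run changes -/
def auxChanges {X B : Type*} [DecidableEq B] (f : X → B) : X → List X → List X
  | _, [] => []
  | a, b :: l => if f a ≠ f b then a :: b :: auxChanges f b l else auxChanges f b l

theorem auxChanges_length {X B : Type*} [DecidableEq B] (f : X → B) (l : List X) :
    ∀ a, (auxChanges f a l).length + 2 ≤
      2 * (List.destutter' (· ≠ ·) (f a) (l.map f)).length := by
  induction l with
  | nil => intro a; simp [auxChanges]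
  | cons b l ih =>
    intro a
    have := ih b
    by_cases h : f a = f b
    · simp only [auxChanges, h, List.map_cons, List.destutter', ne_eq, not_true_eq_false,
        if_false]
      exact this
    · simp only [auxChanges, List.map_cons, List.destutter', ne_eq, h, not_false_eq_true,
        if_true, List.length_cons]
      simp only [ne_eq] at this
      omega

theorem auxChanges_subset {X B : Type*} [DecidableEq B] (f : X → B) (l : List X) :
    ∀ a, ∀ z ∈ auxChanges f a l, z ∈ a :: l := by
  induction l with
  | nil => intro a; simp [auxChanges]
  | cons b l ih =>
    intro a z hz
    have := ih b z
    unfold auxChanges at hz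
    split_ifs at hz <;> simp_all
    rcases hz with h | h | h
    · exact Or.inl h
    · exact Or.inr (Or.inl h)
    · exact Or.inr (ih b z h)

theorem auxChanges_spec {X B : Type*} [DecidableEq B] (f : X → B) (R : X → X → Prop)
    (P : X → Prop) (hP : ∀ x y z, P x → P z → R x y → R y z → P y) (l : List X) :
    ∀ a, (a :: l).Pairwise R → ∀ x ∈ a :: l, ∀ y ∈ a :: l, P x → P y → f x ≠ f y →
      ∃ z ∈ auxChanges f a l, P z ∧ f z = f x := by
  induction l with
  | nil => intro a _ x hx y hy; simp at hx hy; subst hx; subst hy; simp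
  | cons b l ih =>
    intro a hR x hx y hy px py hxy
    have hR1 := (List.pairwise_cons.1 hR).1
    have hR2 := List.Pairwise.of_cons hR
    have ih := ih b hR2
    have hsub : ∀ z, z ∈ auxChanges f b l → z ∈ auxChanges f a (b :: l) := by
      intro z hz
      unfold auxChanges
      split_ifs <;> simp [hz]
    have hb : b ∈ b :: l := by simp
    have mid : ∀ y ∈ b :: l, P a → P y → P b := by
      intro y hy pa py
      rcases List.mem_cons.1 hy with rfl | hy'
      · exact py
      · exact hP a b y pa py (hR1 b hb) (List.rel_of_pairwise_cons hR2 hy')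
    rcases List.mem_cons.1 hx with rfl | hx'
    · rcases List.mem_cons.1 hy with rfl | hy'
      · exact absurd rfl hxy
      by_cases h : f x = f b
      · obtain ⟨z, hz, pz, fz⟩ := ih b hb y hy' (mid y hy' px py) py (h ▸ hxy)
        exact ⟨z, hsub z hz, pz, fz.trans h.symm⟩
      · exact ⟨x, by simp [auxChanges, h], px, rfl⟩
    · rcases List.mem_cons.1 hy with rfl | hy'
      · have pb := mid x hx' py px
        by_cases h : f x = f b
        · exact ⟨b, by simp [auxChanges, ← h, hxy.symm], pb, h.symm⟩
        · obtain ⟨z, hz, pz, fz⟩ := ih x hx' b hb px pb h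
          exact ⟨z, hsub z hz, pz, fz⟩
      · obtain ⟨z, hz, pz, fz⟩ := ih x hx' y hy' px py hxy
        exact ⟨z, hsub z hz, pz, fz⟩

theorem aux_convex {A : Type*} [LinearOrder A] (p : List A) :
    ∀ x y z : List A, p <+: x → p <+: z → x ≤ y → y ≤ z → p <+: y := by
  induction p with
  | nil => intros; exact List.nil_prefix
  | cons a p ih =>
    rintro x y z ⟨x', rfl⟩ ⟨z', rfl⟩ hxy hyz
    cases y with
    | nil => exact absurd (List.nil_lt_cons a (p ++ x')) (not_lt.2 hxy)
    | cons b y =>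
      rw [← not_lt, List.cons_append, List.cons_lt_cons_iff, not_or] at hxy hyz
      have hab : a = b := le_antisymm (not_lt.1 hxy.1) (not_lt.1 hyz.1)
      subst hab
      have h1 : p ++ x' ≤ y := not_lt.1 fun h => hxy.2 ⟨rfl, h⟩
      have h2 : y ≤ p ++ z' := not_lt.1 fun h => hyz.2 ⟨rfl, h⟩
      exact List.cons_prefix_cons.2 ⟨rfl, ih _ _ _ ⟨_, rfl⟩ ⟨_, rfl⟩ h1 h2⟩

theorem aux_fwd {A : Type*} (T w : List A) (c : A) (h : (w ++ [c]) <:+: T) :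
    ∃ k < T.length, w.reverse <+: T.reverse.rotate k ∧
      (T.reverse.rotate k).getLast? = some c := by
  obtain ⟨u, v, rfl⟩ := h
  refine ⟨(v.reverse ++ [c]).length % (u ++ (w ++ [c]) ++ v).reverse.length, ?_, ?_⟩
  · rw [List.length_reverse]; apply Nat.mod_lt; simp
  · rw [List.rotate_mod]
    have : (u ++ (w ++ [c]) ++ v).reverse = (v.reverse ++ [c]) ++ (w.reverse ++ u.reverse) := by
      simp
    rw [this, List.rotate_append_length_eq]
    exact ⟨⟨u.reverse ++ (v.reverse ++ [c]), by simp⟩, by simp [← List.append_assoc]⟩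

/-- position in `T` of the last character of rotation `k` of the reverse -/
def auxPos (n k : ℕ) : ℕ := if k = 0 then 1 else n - k + 1

theorem aux_bwd {A : Type*} (T' : List A) (e : A) (w : List A) (hw : e ∉ w) (c : A) (k : ℕ)
    (hk : k < (T' ++ [e]).length) (h1 : w.reverse <+: (T' ++ [e]).reverse.rotate k)
    (h2 : ((T' ++ [e]).reverse.rotate k).getLast? = some c) :
    (w ++ [c]) <:+ (T' ++ [e]).take (auxPos (T' ++ [e]).length k) := by
  cases k with
  | zero =>
    have hw0 : w = [] := by
      by_contra hne
      obtain ⟨w', d, rfl⟩ : ∃ w' d, w = w' ++ [d] :=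
          ⟨_, _, (List.dropLast_append_getLast hne).symm⟩
      simp at h1
      simp [h1.1] at hw
    subst hw0
    rw [List.rotate_zero, List.getLast?_reverse] at h2
    cases hT : T' ++ [e] with
    | nil => simp at hT
    | cons x l => simp_all [auxPos]
  | succ m =>
    set W := (T' ++ [e]).reverse with hW
    have hWl : W.length = (T' ++ [e]).length := List.length_reverse
    have hm : m < W.length := by omega
    obtain ⟨X, d, Y, hXY, hX⟩ : ∃ X d Y, W = X ++ [d] ++ Y ∧ X.length = m :=
      ⟨W.take m, W[m], W.drop (m+1), by simp, by simp; omega⟩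
    have hr : W.rotate (m+1) = Y ++ (X ++ [d]) := by
      rw [hXY, ← List.rotate_append_length_eq (X ++ [d]) Y]; simp [hX]
    rw [hr] at h1 h2
    have hd : d = c := by simpa [← List.append_assoc] using h2
    subst hd
    have hpre : w.reverse <+: Y := by
      rcases le_or_gt w.reverse.length Y.length with hle | hlt
      · exact List.prefix_of_prefix_length_le h1 (List.prefix_append _ _) hle
      · exfalso
        obtain ⟨r, hr'⟩ := List.prefix_of_prefix_length_le (List.prefix_append Y (X ++ [d])) h1 hlt.le
        have hrX : r <+: X ++ [d] := by
          rw [← hr'] at h1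
          exact (List.prefix_append_right_inj Y).1 h1
        cases r with
        | nil => simp [← hr'] at hlt
        | cons x r =>
          obtain ⟨t, ht⟩ := hrX
          have h5 : W = x :: (r ++ t ++ Y) := by rw [hXY, ← ht]; simp
          have h6 : W = e :: T'.reverse := by rw [hW]; simp
          have hxe : x = e := by rw [h6] at h5; exact (List.cons.inj h5).1.symm
          apply hw
          rw [← List.mem_reverse, ← hr', hxe]; simp
    have hT : T' ++ [e] = Y.reverse ++ [d] ++ X.reverse := by
      rw [← List.reverse_reverse (T' ++ [e]), ← hW, hXY]; simp
    have hlen : auxPos (T' ++ [e]).length (m+1) = (Y.reverse ++ [d]).length := by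
      simp only [auxPos, hT, List.length_append, List.length_reverse, List.length_singleton, hX]
      simp; omega
    rw [hlen, hT, List.take_left]
    obtain ⟨r, rfl⟩ := hpre
    exact ⟨r.reverse, by simp⟩

theorem aux_no_last {A : Type*} (T' : List A) (e : A) (he : e ∉ T') (w : List A) (c : A)
    (h : (w ++ [c]) <:+: T' ++ [e]) : e ∉ w := by
  intro hew
  obtain ⟨p, q, hpq⟩ := h
  obtain ⟨q', d', hq⟩ : ∃ q' d', c :: q = q' ++ [d'] :=
    ⟨_, _, (List.dropLast_append_getLast (by simp)).symm⟩
  have h4 : T' ++ [e] = (p ++ w ++ q') ++ [d'] := by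
    rw [← hpq]; simp [← hq]
  have := (List.append_inj' h4 rfl).1
  apply he
  rw [this]; simp [hew]

theorem aux_chi {A : Type*} [LinearOrder A] (T' : List A) (e : A) (he : e ∉ T') :
    ∃ S : Finset ℕ, IsSuffixient (T' ++ [e]) S ∧
      S.card ≤ 2 * runsCount (BWT (T' ++ [e]).reverse) := by
  set T := T' ++ [e] with hT
  set f : ℕ → Option A := fun k => (T.reverse.rotate k).getLast? with hf
  set R : ℕ → ℕ → Prop := fun a b => T.reverse.rotate a ≤ T.reverse.rotate b with hR
  have hsort : (sortedRotIdx T.reverse).Pairwise R := by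
    have : Std.Total R := ⟨fun a b => le_total _ _⟩
    have : IsTrans ℕ R := ⟨fun a b c => le_trans⟩
    exact List.pairwise_insertionSort R _
  have hmem : ∀ k, k ∈ sortedRotIdx T.reverse ↔ k < T.length := by
    intro k
    unfold sortedRotIdx
    rw [List.mem_insertionSort, List.mem_range, List.length_reverse]
  have hB : BWT T.reverse = (sortedRotIdx T.reverse).map f := rfl
  cases hL : sortedRotIdx T.reverse with
  | nil =>
    have := (hmem 0).2 (by simp [hT])
    rw [hL] at this; simp at this
  | cons a l =>
    rw [hL] at hsort hmem hB
    refine ⟨((auxChanges f a l).map (auxPos T.length)).toFinset, ⟨?_, ?_⟩, ?_⟩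
    · intro s hs
      simp only [List.mem_toFinset, List.mem_map] at hs
      obtain ⟨k, hk, rfl⟩ := hs
      have := (hmem k).1 (auxChanges_subset f l a k hk)
      unfold auxPos
      split_ifs <;> omega
    · intro w c hrm hc
      have hew := aux_no_last T' e he w c hc
      obtain ⟨c', hcc, hc'⟩ : ∃ c', c ≠ c' ∧ (w ++ [c']) <:+: T := by
        obtain ⟨c1, c2, h12, h1, h2⟩ := hrm
        by_cases h : c = c1
        · exact ⟨c2, h ▸ h12, h2⟩
        · exact ⟨c1, h, h1⟩
      obtain ⟨x, hx, px, fx⟩ := aux_fwd T w c hc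
      obtain ⟨y, hy, py, fy⟩ := aux_fwd T w c' hc'
      obtain ⟨z, hz, pz, fz⟩ := auxChanges_spec f R (fun k => w.reverse <+: T.reverse.rotate k)
        (fun x y z px pz hxy hyz => aux_convex _ _ _ _ px pz hxy hyz) l a hsort x
        ((hmem x).2 hx) y ((hmem y).2 hy) px py (by
          rw [hf]; simp only [fx, fy]; simpa using hcc)
      refine ⟨auxPos T.length z, ?_, ?_⟩
      · simp only [List.mem_toFinset, List.mem_map]
        exact ⟨z, hz, rfl⟩
      · exact aux_bwd T' e w hew c z ((hmem z).1 (auxChanges_subset f l a z hz)) pz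
          (fz.trans fx)
    · refine (List.toFinset_card_le _).trans ?_
      rw [List.length_map, hB]
      have := auxChanges_length f l a
      unfold runsCount
      rw [List.map_cons, List.destutter]
      omega

/-- `γ ≤ χ ≤ 2·r̄`, where `γ` is the minimum cardinality of a string attractor for `T`,
`χ` the minimum cardinality of a suffixient set for `T`, and `r̄` the number of runs
of `BWT(reverse T)`. -/
theorem gamma_le_chi_le_two_rbar {A : Type*} [LinearOrder A] (T : List A)
    (hne : T ≠ []) (hn : 2 ≤ T.length)
    (hlast : T.count (T.getLast hne) = 1) :
    sInf {k : ℕ | ∃ Γ : Finset ℕ, IsAttractor T Γ ∧ Γ.card = k} ≤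
      sInf {k : ℕ | ∃ S : Finset ℕ, IsSuffixient T S ∧ S.card = k} ∧
    sInf {k : ℕ | ∃ S : Finset ℕ, IsSuffixient T S ∧ S.card = k} ≤
      2 * runsCount (BWT T.reverse) := by
  have hcount := hlast
  obtain ⟨T', e, rfl⟩ : ∃ T' e, T = T' ++ [e] :=
    ⟨_, _, (List.dropLast_append_getLast hne).symm⟩
  have he : e ∉ T' := by
    intro h
    have := List.count_pos_iff.2 h
    simp at hcount
    exact absurd hcount (by omega)
  have hT' : T' ≠ [] := by
    rintro rfl
    simp at hn
  obtain ⟨S, hS, hcard⟩ := aux_chi T' e he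
  constructor
  · obtain ⟨S', hS', hc'⟩ := Nat.sInf_mem
      (s := {k : ℕ | ∃ S : Finset ℕ, IsSuffixient (T' ++ [e]) S ∧ S.card = k}) ⟨_, S, hS, rfl⟩
    exact Nat.sInf_le ⟨S', aux_attractor T' e he hT' S' hS', hc'⟩
  · refine le_trans (Nat.sInf_le ?_) hcard
    exact ⟨S, hS, rfl⟩
end
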